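/- arXiv:2508.09795 — 3 statements merged into one kernel-verified Lean document; each statement's English description precedes it below -/
import Mathlib

section
/- For every x ∈ X̂ one has d̂(x,∞) = d_a(x,∞) and d̂(x,a) = d_a(x,a); in particular, d̂(x,∞) = 1/(1+|x|) for every x ∈ X. -/
open Metric Set MeasureTheory Filter
open scoped ENNReal NNReal

noncomputable section

variable {X : Type*}

/-- The quasimetric `d_a` on the sphericalization `X̂ = X ∪ {∞}`, with `none` playing
the role of the point `∞`. -/
noncomputable def sphDist [MetricSpace X] (a : X) : Option X → Option X → ℝ
  | some x, some y => dist x y / ((1 + dist x a) * (1 + dist y a))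
  | some x, none => 1 / (1 + dist x a)
  | none, some y => 1 / (1 + dist y a)
  | none, none => 0

/-- The sum `Σ_{j=1}^k d_a(x_{j-1}, x_j)` along a finite sequence (list) in `X̂`. -/
noncomputable def chainSum [MetricSpace X] (a : X) : List (Option X) → ℝ
  | [] => 0
  | [_] => 0
  | x :: y :: l => sphDist a x y + chainSum a (y :: l)

/-- The sphericalized distance `d̂(x,y) = inf Σ_{j=1}^k d_a(x_{j-1},x_j)`, the infimum
being taken over all finite sequences `x = x_0, x_1, …, x_k = y` in `X̂`. -/
noncomputable def sphHatDist [MetricSpace X] (a : X) (x y : Option X) : ℝ :=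
  sInf {s : ℝ | ∃ L : List (Option X),
    L.head? = some x ∧ L.getLast? = some y ∧ chainSum a L = s}

/-- `d̂(x) = d̂(x,∞) = 1/(1+|x|)` for `x ∈ X`. -/
noncomputable def sphD [MetricSpace X] (a x : X) : ℝ := 1 / (1 + dist x a)

theorem sub_le_chainSum [MetricSpace X] {a : X} {f : Option X → ℝ}
    (hf : ∀ x y, f x - f y ≤ sphDist a x y) :
    ∀ (l : List (Option X)) (x y : Option X), l.head? = some x → l.getLast? = some y →
      f x - f y ≤ chainSum a l
  | [], _, _, hx, _ => by simp at hx
  | [z], x, y, hx, hy => by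
    simp only [List.head?_cons, List.getLast?_singleton, Option.some.injEq] at hx hy
    subst hx hy
    simp [chainSum]
  | z :: w :: l, x, y, hx, hy => by
    simp only [List.head?_cons, Option.some.injEq] at hx
    subst hx
    rw [List.getLast?_cons_cons] at hy
    have h := sub_le_chainSum hf (w :: l) w y rfl hy
    have h' := hf z w
    rw [chainSum]
    linarith

/-- If a function that is 1-Lipschitz for `d_a` realizes `d_a(x,y)` as its increment,
then no chain from `x` to `y` is shorter than `d_a(x,y)`. -/
theorem sphHatDist_eq_sphDist [MetricSpace X] {a : X} {f : Option X → ℝ}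
    (hf : ∀ x y, f x - f y ≤ sphDist a x y) {x y : Option X}
    (hxy : f x - f y = sphDist a x y) : sphHatDist a x y = sphDist a x y := by
  refine IsLeast.csInf_eq ⟨⟨[x, y], rfl, rfl, by simp [chainSum]⟩, ?_⟩
  rintro _ ⟨l, hx, hy, rfl⟩
  exact hxy ▸ sub_le_chainSum hf l x y hx hy

theorem sphDist_comm [MetricSpace X] (a : X) (x y : Option X) :
    sphDist a x y = sphDist a y x := by
  cases x <;> cases y <;> simp [sphDist, dist_comm, mul_comm]

theorem sphDist_none_sub_le [MetricSpace X] (a : X) (x y : Option X) :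
    sphDist a x none - sphDist a y none ≤ sphDist a x y := by
  cases x with
  | none =>
    cases y with
    | none => simp [sphDist]
    | some y =>
      have : 0 ≤ 1 / (1 + dist y a) := by positivity
      simp only [sphDist]
      linarith
  | some x =>
    cases y with
    | none => simp [sphDist]
    | some y =>
      have hx : 0 < 1 + dist x a := by positivity
      have hy : 0 < 1 + dist y a := by positivity
      have h : dist y a ≤ dist x y + dist x a := by
        simpa [dist_comm] using dist_triangle y x a
      simp only [sphDist]
      rw [div_sub_div _ _ hx.ne' hy.ne']
      gcongr
      linarith

theorem sphDist_some_self_eq [MetricSpace X] (a : X) (x : Option X) :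
    sphDist a x (some a) = 1 - sphDist a x none := by
  cases x with
  | none => simp [sphDist]
  | some x =>
    have hx : 1 + dist x a ≠ 0 := by positivity
    simp only [sphDist, dist_self]
    field_simp
    ring

/-- For every `x ∈ X̂` one has `d̂(x,∞) = d_a(x,∞)` and
`d̂(x,a) = d_a(x,a)`; in particular `d̂(x,∞) = 1/(1+|x|)` for every `x ∈ X`. -/
theorem statement2 [MetricSpace X]
    (hX : ¬ Bornology.IsBounded (Set.univ : Set X)) (a : X) :
    (∀ x : Option X, sphHatDist a x none = sphDist a x none) ∧
    (∀ x : Option X, sphHatDist a x (some a) = sphDist a x (some a)) ∧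
    (∀ x : X, sphHatDist a (some x) none = 1 / (1 + dist x a)) := by
  have hinf : ∀ x : Option X, sphHatDist a x none = sphDist a x none := fun x =>
    sphHatDist_eq_sphDist (sphDist_none_sub_le a) (by simp [sphDist])
  refine ⟨hinf, fun x => ?_, fun x => hinf (some x)⟩
  refine sphHatDist_eq_sphDist (f := fun z => -sphDist a z none) (fun y z => ?_) ?_
  · have := sphDist_none_sub_le a z y
    rw [sphDist_comm a y z]
    linarith
  · rw [sphDist_some_self_eq]
    simp [sphDist]
    ring
end
end

section
/- Assume that X is uniformly perfect at a for radii ≥ 1 with constant κ, that μ is doubling, and that for some q > 0 the measure μ̂_q is doubling on (X̂, d̂). Then there exist δ ∈ (0,q) and a constant C > 0 such that μ̂_q(B̂(∞,ρ')) ≤ C (ρ'/ρ)^δ μ̂_q(B̂(∞,ρ)) whenever 0 < ρ' ≤ ρ ≤ 1/(1+4κ). -/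
open Metric Set MeasureTheory Filter
open scoped ENNReal NNReal

noncomputable section

variable {X : Type*}

/-- `d̂(x) = d̂(x,∞)` on all of `X̂`, with the convention `d̂(∞) = 0`. -/
noncomputable def sphDhat [MetricSpace X] (a : X) : Option X → ℝ
  | none => 0
  | some x => sphD a x

/-- The sphericalized measure `μ̂_q` on `X̂`: `dμ̂_q(x) = (1+|x|)^{-q} dμ(x)` on `X`,
and `μ̂_q({∞}) = 0`.  Here `sphMeas a q μ S` is the value `μ̂_q(S)` for `S ⊆ X̂`. -/
noncomputable def sphMeas [MetricSpace X] [MeasurableSpace X] (a : X) (q : ℝ)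
    (μ : Measure X) (S : Set (Option X)) : ℝ≥0∞ :=
  ∫⁻ x in (Option.some ⁻¹' S), ENNReal.ofReal (((1 + dist x a) ^ q)⁻¹) ∂μ

lemma sphDhat_nonneg [MetricSpace X] (a : X) (x : Option X) : 0 ≤ sphDhat a x := by
  cases x with
  | none => exact le_rfl
  | some x => simp only [sphDhat, sphD]; positivity

lemma abs_sphDhat_sub_le_sphDist [MetricSpace X] (a : X) (x y : Option X) :
    |sphDhat a x - sphDhat a y| ≤ sphDist a x y := by
  cases x with
  | none =>
    cases y with
    | none => simp [sphDhat, sphDist]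
    | some y =>
      have h := sphDhat_nonneg a (some y)
      simp only [sphDhat, sphD] at h
      simp [sphDhat, sphD, sphDist, abs_of_nonneg (by simpa using h)]
  | some x =>
    cases y with
    | none =>
      have h := sphDhat_nonneg a (some x)
      simp only [sphDhat, sphD] at h
      simp [sphDhat, sphD, sphDist, abs_of_nonneg (by simpa using h)]
    | some y =>
      have hx : 0 < 1 + dist x a := by positivity
      have hy : 0 < 1 + dist y a := by positivity
      have h : 1 / (1 + dist x a) - 1 / (1 + dist y a) =
          (dist y a - dist x a) / ((1 + dist x a) * (1 + dist y a)) := by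
        field_simp
        ring
      simp only [sphDhat, sphD, sphDist]
      rw [h, abs_div, abs_of_pos (mul_pos hx hy)]
      gcongr
      rw [dist_comm x y]
      exact abs_dist_sub_le y x a

lemma abs_sphDhat_sub_le_chainSum [MetricSpace X] (a : X) (y : Option X) :
    ∀ (L : List (Option X)) (x : Option X), L.head? = some x → L.getLast? = some y →
      |sphDhat a x - sphDhat a y| ≤ chainSum a L
  | [], x, hx, _ => by simp at hx
  | [z], x, hx, hy => by
    simp at hx hy
    subst hx hy
    simp [chainSum]
  | z :: w :: l, x, hx, hy => by
    simp only [List.head?_cons, Option.some.injEq] at hx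
    subst hx
    have ih := abs_sphDhat_sub_le_chainSum a y (w :: l) w (by simp)
      (by rwa [List.getLast?_cons_cons] at hy)
    calc |sphDhat a z - sphDhat a y|
        ≤ |sphDhat a z - sphDhat a w| + |sphDhat a w - sphDhat a y| := abs_sub_le _ _ _
      _ ≤ chainSum a (z :: w :: l) := add_le_add (abs_sphDhat_sub_le_sphDist a z w) ih

lemma abs_sphDhat_sub_le_sphHatDist [MetricSpace X] (a : X) (x y : Option X) :
    |sphDhat a x - sphDhat a y| ≤ sphHatDist a x y := by
  refine le_csInf ⟨_, [x, y], by simp, by simp, rfl⟩ ?_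
  rintro s ⟨L, hx, hy, rfl⟩
  exact abs_sphDhat_sub_le_chainSum a y L x hx hy

lemma sphHatDist_le_add [MetricSpace X] (a : X) (x y : Option X) :
    sphHatDist a x y ≤ sphDhat a x + sphDhat a y := by
  refine csInf_le ⟨0, ?_⟩ ⟨[x, none, y], by simp, by simp, ?_⟩
  · rintro s ⟨L, hx, hy, rfl⟩
    exact (abs_nonneg _).trans (abs_sphDhat_sub_le_chainSum a y L x hx hy)
  · cases x <;> cases y <;> simp [chainSum, sphDist, sphDhat, sphD]

lemma sphHatDist_none [MetricSpace X] (a : X) (y : Option X) :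
    sphHatDist a none y = sphDhat a y := by
  refine le_antisymm (by simpa [sphDhat] using sphHatDist_le_add a none y) ?_
  have h : sphDhat a y - sphDhat a none ≤ sphHatDist a none y :=
    (le_abs_self _).trans ((abs_sub_comm _ _).trans_le (abs_sphDhat_sub_le_sphHatDist a none y))
  rwa [show sphDhat a none = 0 from rfl, sub_zero] at h

lemma sphMeas_mono [MetricSpace X] [MeasurableSpace X] (a : X) (q : ℝ) (μ : Measure X)
    {S T : Set (Option X)} (h : S ⊆ T) : sphMeas a q μ S ≤ sphMeas a q μ T :=
  lintegral_mono_set (preimage_mono h)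

/-- Iterated doubling of the sphericalized measure. -/
lemma sphMeas_ball_two_pow_mul_le [MetricSpace X] [MeasurableSpace X] {a : X} {q : ℝ}
    {μ : Measure X} {C : ℝ} (hC : 0 ≤ C)
    (hdoub : ∀ (x : Option X) (r : ℝ), 0 < r →
      sphMeas a q μ {y : Option X | sphHatDist a x y < 2 * r} ≤
        ENNReal.ofReal C * sphMeas a q μ {y : Option X | sphHatDist a x y < r})
    (x : Option X) {r : ℝ} (hr : 0 < r) (n : ℕ) :
    sphMeas a q μ {y : Option X | sphHatDist a x y < 2 ^ n * r} ≤
      ENNReal.ofReal (C ^ n) * sphMeas a q μ {y : Option X | sphHatDist a x y < r} := by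
  induction n with
  | zero => simp
  | succ n ih =>
    have h := hdoub x (2 ^ n * r) (by positivity)
    rw [← mul_assoc, ← pow_succ'] at h
    refine h.trans ((mul_le_mul_right ih _).trans_eq ?_)
    rw [← mul_assoc, ← ENNReal.ofReal_mul hC, pow_succ']

/-- Reverse doubling at infinity for the sphericalized measure, at a single scale. -/
lemma exists_sphMeas_reverse_doubling [MetricSpace X] [MeasurableSpace X] [BorelSpace X]
    {a : X} {μ : Measure X} {κ : ℝ} (hκ : 1 < κ)
    (hup : ∀ r : ℝ, 1 ≤ r → (Metric.ball a (κ * r) \ Metric.ball a r).Nonempty)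
    {q C : ℝ} (hC : 1 < C)
    (hdoub : ∀ (x : Option X) (r : ℝ), 0 < r →
      sphMeas a q μ {y : Option X | sphHatDist a x y < 2 * r} ≤
        ENNReal.ofReal C * sphMeas a q μ {y : Option X | sphHatDist a x y < r}) :
    ∃ θ : ℝ, 0 < θ ∧ θ < 1 ∧ ∀ ρ : ℝ, 0 < ρ → ρ ≤ 1 →
      sphMeas a q μ {y : Option X | sphHatDist a none y < (6 * κ)⁻¹ * ρ} ≤
        ENNReal.ofReal θ * sphMeas a q μ {y : Option X | sphHatDist a none y < ρ} := by
  obtain ⟨n, hn⟩ := pow_unbounded_of_one_lt (2 * (3 * κ + 1)) one_lt_two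
  have hK : 0 < C ^ n := by positivity
  refine ⟨C ^ n / (C ^ n + 1), by positivity, (div_lt_one (by positivity)).2 (by linarith), ?_⟩
  intro ρ hρ hρ1
  obtain ⟨x, hxκ, hx⟩ := hup (2 / ρ) ((one_le_div hρ).2 (by linarith))
  simp only [mem_ball, not_lt] at hxκ hx
  set D := sphDhat a (some x) with hD
  have hDeq : D = 1 / (1 + dist x a) := rfl
  have hDpos : 0 < D := by rw [hDeq]; positivity
  have hDlt : D < ρ / 2 := by
    rw [hDeq, div_lt_iff₀ (by positivity)]
    rw [div_le_iff₀ hρ] at hx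
    nlinarith
  have hDgt : ρ < 3 * κ * D := by
    rw [hDeq, mul_one_div, lt_div_iff₀ (by positivity)]
    rw [← mul_div_assoc, lt_div_iff₀ hρ] at hxκ
    nlinarith
  set A := {y : Option X | sphHatDist a (some x) y < D / 2} with hA
  set S := {y : Option X | sphHatDist a none y < (6 * κ)⁻¹ * ρ} with hS
  set T := {y : Option X | sphHatDist a none y < ρ} with hT
  have hε : (6 * κ)⁻¹ * ρ < D / 2 := by
    rw [inv_mul_lt_iff₀ (by positivity)]
    linarith
  have hTA : sphMeas a q μ T ≤ ENNReal.ofReal (C ^ n) * sphMeas a q μ A := by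
    refine le_trans (sphMeas_mono a q μ fun y hy => ?_)
      (sphMeas_ball_two_pow_mul_le (by linarith) hdoub (some x) (half_pos hDpos) n)
    simp only [hT, mem_ofPred_eq, sphHatDist_none] at hy
    have := sphHatDist_le_add a (some x) y
    simp only [mem_ofPred_eq]
    nlinarith
  have hST : S ⊆ T := fun y hy => by
    simp only [hS, hT, mem_ofPred_eq] at hy ⊢
    linarith
  have hAbound : ∀ y ∈ A, D / 2 < sphDhat a y ∧ sphDhat a y < ρ := fun y hy => by
    have := abs_lt.1 ((abs_sphDhat_sub_le_sphHatDist a (some x) y).trans_lt hy)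
    constructor <;> linarith
  have hAT : A ⊆ T := fun y hy => by
    simpa only [hT, mem_ofPred_eq, sphHatDist_none] using (hAbound y hy).2
  have hdisj : Disjoint A S := Set.disjoint_left.2 fun y hyA hyS => by
    simp only [hS, mem_ofPred_eq, sphHatDist_none] at hyS
    linarith [(hAbound y hyA).1]
  have hmeas : MeasurableSet (Option.some ⁻¹' S) := by
    have : (Option.some ⁻¹' S) = {y : X | 1 / (1 + dist y a) < (6 * κ)⁻¹ * ρ} := by
      ext y
      simp only [hS, mem_preimage, mem_ofPred_eq, sphHatDist_none, sphDhat, sphD]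
    rw [this]
    refine (isOpen_lt ?_ continuous_const).measurableSet
    exact continuous_const.div (by fun_prop) fun y => by positivity
  have hadd : sphMeas a q μ A + sphMeas a q μ S ≤ sphMeas a q μ T := by
    rw [sphMeas, sphMeas, ← lintegral_union hmeas (hdisj.preimage _), ← preimage_union]
    exact sphMeas_mono a q μ (union_subset hAT hST)
  have key : ENNReal.ofReal (C ^ n + 1) * sphMeas a q μ S ≤
      ENNReal.ofReal (C ^ n) * sphMeas a q μ T := by
    rw [ENNReal.ofReal_add hK.le zero_le_one, ENNReal.ofReal_one, add_mul, one_mul]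
    calc ENNReal.ofReal (C ^ n) * sphMeas a q μ S + sphMeas a q μ S
        ≤ ENNReal.ofReal (C ^ n) * sphMeas a q μ S +
            ENNReal.ofReal (C ^ n) * sphMeas a q μ A := by
          gcongr
          exact (sphMeas_mono a q μ hST).trans hTA
      _ = ENNReal.ofReal (C ^ n) * (sphMeas a q μ A + sphMeas a q μ S) := by
          rw [mul_add, add_comm]
      _ ≤ ENNReal.ofReal (C ^ n) * sphMeas a q μ T := by gcongr
  have hK1 : 0 < C ^ n + 1 := by positivity
  calc sphMeas a q μ S
      = ENNReal.ofReal (C ^ n + 1)⁻¹ * (ENNReal.ofReal (C ^ n + 1) * sphMeas a q μ S) := by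
        rw [← mul_assoc, ← ENNReal.ofReal_mul (by positivity), inv_mul_cancel₀ hK1.ne',
          ENNReal.ofReal_one, one_mul]
    _ ≤ ENNReal.ofReal (C ^ n + 1)⁻¹ * (ENNReal.ofReal (C ^ n) * sphMeas a q μ T) := by gcongr
    _ = ENNReal.ofReal (C ^ n / (C ^ n + 1)) * sphMeas a q μ T := by
        rw [← mul_assoc, ← ENNReal.ofReal_mul (by positivity), div_eq_inv_mul]

/-- A monotone function that shrinks by a factor `θ` at each passage from scale `ρ` to `ε * ρ`
decays like a power of the scale, with an exponent as small as desired. -/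
lemma exists_rpow_decay_of_geometric_decay {M : ℝ → ℝ≥0∞} (hM : Monotone M) {ε θ q : ℝ}
    (hε : 0 < ε) (hε1 : ε < 1) (hθ : 0 < θ) (hθ1 : θ < 1) (hq : 0 < q)
    (h : ∀ ρ : ℝ, 0 < ρ → ρ ≤ 1 → M (ε * ρ) ≤ ENNReal.ofReal θ * M ρ) :
    ∃ δ C : ℝ, 0 < δ ∧ δ < q ∧ 0 < C ∧ ∀ ρ' ρ : ℝ, 0 < ρ' → ρ' ≤ ρ → ρ ≤ 1 →
      M ρ' ≤ ENNReal.ofReal (C * (ρ' / ρ) ^ δ) * M ρ := by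
  have hlogε : Real.log ε < 0 := Real.log_neg hε hε1
  set δ := min (Real.log θ / Real.log ε) (q / 2) with hδ
  have hδ0 : 0 < δ := lt_min (div_pos_of_neg_of_neg (Real.log_neg hθ hθ1) hlogε) (half_pos hq)
  have hθδ : θ ≤ ε ^ δ := by
    rw [Real.le_rpow_iff_log_le hθ hε, ← le_div_iff_of_neg hlogε]
    exact min_le_left _ _
  refine ⟨δ, (ε ^ δ)⁻¹, hδ0, (min_le_right _ _).trans_lt (half_lt_self hq), by positivity, ?_⟩
  intro ρ' ρ hρ' hle hρ1
  have hρ : 0 < ρ := hρ'.trans_le hle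
  have iter : ∀ k : ℕ, M (ε ^ k * ρ) ≤ ENNReal.ofReal (θ ^ k) * M ρ := by
    intro k
    induction k with
    | zero => simp
    | succ k ih =>
      have h1 := h (ε ^ k * ρ) (by positivity)
        (mul_le_one₀ (pow_le_one₀ hε.le hε1.le) hρ.le hρ1)
      rw [← mul_assoc, ← pow_succ'] at h1
      refine h1.trans ((mul_le_mul_right ih _).trans_eq ?_)
      rw [← mul_assoc, ← ENNReal.ofReal_mul hθ.le, pow_succ']
  obtain ⟨k, hk, hk'⟩ := exists_nat_pow_near_of_lt_one (div_pos hρ' hρ)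
    ((div_le_one hρ).2 hle) hε hε1
  refine (hM ((div_le_iff₀ hρ).1 hk')).trans ((iter k).trans ?_)
  gcongr
  rw [← div_eq_inv_mul, le_div_iff₀ (by positivity)]
  calc θ ^ k * ε ^ δ ≤ (ε ^ δ) ^ k * ε ^ δ := by gcongr
    _ = (ε ^ (k + 1)) ^ δ := by
        rw [← pow_succ, ← Real.rpow_natCast, ← Real.rpow_mul hε.le, mul_comm,
          Real.rpow_mul hε.le, Real.rpow_natCast]
    _ ≤ (ρ' / ρ) ^ δ := by gcongr

/-- If `X` is uniformly perfect at `a` for radii `≥ 1` with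
constant `κ`, `μ` is doubling, and for some `q > 0` the measure `μ̂_q` is doubling on
`(X̂, d̂)`, then there exist `δ ∈ (0,q)` and `C > 0` such that
`μ̂_q(B̂(∞,ρ')) ≤ C (ρ'/ρ)^δ μ̂_q(B̂(∞,ρ))` whenever `0 < ρ' ≤ ρ ≤ 1/(1+4κ)`. -/
theorem statement17 [MetricSpace X] [MeasurableSpace X] [BorelSpace X]
    (hX : ¬ Bornology.IsBounded (Set.univ : Set X)) (a : X) (μ : Measure X)
    (hpos : ∀ (x : X) (r : ℝ), 0 < r → 0 < μ (Metric.ball x r))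
    (hfin : ∀ (x : X) (r : ℝ), 0 < r → μ (Metric.ball x r) < ⊤)
    (κ : ℝ) (hκ : 1 < κ)
    (hup : ∀ r : ℝ, 1 ≤ r → (Metric.ball a (κ * r) \ Metric.ball a r).Nonempty)
    (Cμ : ℝ) (hCμ : 1 < Cμ)
    (hdoub : ∀ (x : X) (r : ℝ), 0 < r →
      μ (Metric.ball x (2 * r)) ≤ ENNReal.ofReal Cμ * μ (Metric.ball x r))
    (q : ℝ) (hq : 0 < q)
    (Chat : ℝ) (hChat : 1 < Chat)
    (hdoubhat : ∀ (x : Option X) (r : ℝ), 0 < r →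
      sphMeas a q μ {y : Option X | sphHatDist a x y < 2 * r} ≤
        ENNReal.ofReal Chat * sphMeas a q μ {y : Option X | sphHatDist a x y < r}) :
    ∃ δ C : ℝ, 0 < δ ∧ δ < q ∧ 0 < C ∧
      ∀ ρ' ρ : ℝ, 0 < ρ' → ρ' ≤ ρ → ρ ≤ 1 / (1 + 4 * κ) →
        sphMeas a q μ {y : Option X | sphHatDist a none y < ρ'} ≤
          ENNReal.ofReal (C * (ρ' / ρ) ^ δ) *
            sphMeas a q μ {y : Option X | sphHatDist a none y < ρ} := by
  obtain ⟨θ, hθ, hθ1, h⟩ := exists_sphMeas_reverse_doubling hκ hup hChat hdoubhat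
  have hmono : Monotone fun ρ : ℝ => sphMeas a q μ {y : Option X | sphHatDist a none y < ρ} :=
    fun r s hrs => sphMeas_mono a q μ fun y hy => lt_of_lt_of_le hy hrs
  obtain ⟨δ, C, hδ, hδq, hC, hdecay⟩ := exists_rpow_decay_of_geometric_decay hmono
    (inv_pos.2 (by linarith)) (inv_lt_one_of_one_lt₀ (by linarith)) hθ hθ1 hq h
  refine ⟨δ, C, hδ, hδq, hC, fun ρ' ρ hρ' hle hρ => hdecay ρ' ρ hρ' hle (hρ.trans ?_)⟩
  exact (div_le_one (by linarith)).2 (by linarith)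
end
end

section
/- Let κ > 1, let r ≥ 4κ, and let x ∈ X satisfy r/(2κ) ≤ |x| < r/2. Then B̂(x, d̂(x)/3) ⊂ B(a,r) \ B(a, r/(4κ)) ⊂ B̂(∞, 4κ/(1+r)) \ B̂(∞, 1/(1+r)), where B(a,ρ) ⊂ X is regarded as a subset of X̂. -/
open Metric Set MeasureTheory Filter
open scoped ENNReal NNReal

noncomputable section

variable {X : Type*}

/-- The height `1 / (1 + |x|)` of a point of `X̂`, with the value `0` at `∞`. -/
noncomputable def sphHeight [MetricSpace X] (a : X) : Option X → ℝ
  | some x => 1 / (1 + dist x a)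
  | none => 0

theorem abs_sphHeight_sub_le_sphDist [MetricSpace X] (a : X) (x y : Option X) :
    |sphHeight a x - sphHeight a y| ≤ sphDist a x y := by
  rcases x with _ | x <;> rcases y with _ | y
  · simp [sphHeight, sphDist]
  · have hy : 0 < 1 + dist y a := by positivity
    simp [sphHeight, sphDist, abs_of_pos hy]
  · have hx : 0 < 1 + dist x a := by positivity
    simp [sphHeight, sphDist, abs_of_pos hx]
  · have hx : 0 < 1 + dist x a := by positivity
    have hy : 0 < 1 + dist y a := by positivity
    have key : 1 / (1 + dist x a) - 1 / (1 + dist y a) =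
        (dist y a - dist x a) / ((1 + dist x a) * (1 + dist y a)) := by
      field_simp
      ring
    simp only [sphHeight, sphDist]
    rw [key, abs_div, abs_of_pos (mul_pos hx hy), dist_comm x y]
    gcongr
    exact abs_dist_sub_le y x a

theorem abs_sphHeight_sub_le_chainSum [MetricSpace X] (a : X) (L : List (Option X))
    (x y : Option X) (hx : L.head? = some x) (hy : L.getLast? = some y) :
    |sphHeight a x - sphHeight a y| ≤ chainSum a L := by
  induction L generalizing x with
  | nil => simp at hx
  | cons z L ih =>
    obtain rfl : z = x := by simpa using hx
    cases L with
    | nil =>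
      obtain rfl : z = y := by simpa using hy
      simp [chainSum]
    | cons w L =>
      have htail := ih w rfl (by simpa using hy)
      have hstep := abs_sphHeight_sub_le_sphDist a z w
      have htri := abs_sub_le (sphHeight a z) (sphHeight a w) (sphHeight a y)
      simp only [chainSum]
      linarith

theorem abs_sphHeight_sub_le_sphHatDist [MetricSpace X] (a : X) (x y : Option X) :
    |sphHeight a x - sphHeight a y| ≤ sphHatDist a x y := by
  refine le_csInf ⟨_, [x, y], rfl, rfl, rfl⟩ ?_
  rintro s ⟨L, hx, hy, rfl⟩
  exact abs_sphHeight_sub_le_chainSum a L x y hx hy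

theorem sphHatDist_le_sphDist [MetricSpace X] (a : X) (x y : Option X) :
    sphHatDist a x y ≤ sphDist a x y := by
  refine csInf_le ⟨0, ?_⟩ ⟨[x, y], rfl, rfl, by simp [chainSum]⟩
  rintro s ⟨L, hx, hy, rfl⟩
  exact (abs_nonneg _).trans (abs_sphHeight_sub_le_chainSum a L x y hx hy)

theorem sphHatDist_none_some [MetricSpace X] (a y : X) :
    sphHatDist a none (some y) = 1 / (1 + dist y a) := by
  refine le_antisymm (sphHatDist_le_sphDist a none (some y)) ?_
  have h := (neg_le_abs _).trans (abs_sphHeight_sub_le_sphHatDist a none (some y))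
  simpa [sphHeight] using h

/-- Let `κ > 1`, `r ≥ 4κ` and `x ∈ X` with `r/(2κ) ≤ |x| < r/2`.
Then `B̂(x, d̂(x)/3) ⊂ B(a,r) \ B(a, r/(4κ)) ⊂ B̂(∞, 4κ/(1+r)) \ B̂(∞, 1/(1+r))`,
where `B(a,ρ) ⊂ X` is regarded as a subset of `X̂`. -/
theorem statement18 [MetricSpace X]
    (hX : ¬ Bornology.IsBounded (Set.univ : Set X)) (a : X)
    (κ r : ℝ) (hκ : 1 < κ) (hr : 4 * κ ≤ r)
    (x : X) (h1 : r / (2 * κ) ≤ dist x a) (h2 : dist x a < r / 2) :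
    {y : Option X | sphHatDist a (some x) y < sphD a x / 3} ⊆
      Option.some '' (Metric.ball a r \ Metric.ball a (r / (4 * κ))) ∧
    Option.some '' (Metric.ball a r \ Metric.ball a (r / (4 * κ))) ⊆
      {y : Option X | sphHatDist a none y < 4 * κ / (1 + r)} \
        {y : Option X | sphHatDist a none y < 1 / (1 + r)} := by
  have hκ0 : 0 < κ := by linarith
  have hx0 : 0 < 1 + dist x a := by positivity
  have hhalf : r / (2 * κ) = 2 * (r / (4 * κ)) := by
    field_simp
    ring
  have hone : 1 ≤ r / (4 * κ) := (one_le_div (by positivity)).2 hr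
  constructor
  · intro y hy
    have hlt := (abs_sphHeight_sub_le_sphHatDist a (some x) y).trans_lt hy
    rw [abs_lt] at hlt
    obtain ⟨hlow, hupp⟩ := hlt
    have hpos : 0 < 1 / (1 + dist x a) := by positivity
    rcases y with _ | y
    · simp only [sphHeight, sphD] at hupp
      linarith
    have hy0 : 0 < 1 + dist y a := by positivity
    have hlow' : 1 / (1 + dist y a) < 4 / (3 * (1 + dist x a)) := by
      have : 4 / (3 * (1 + dist x a)) = 4 / 3 * (1 / (1 + dist x a)) := by field_simp
      simp only [sphHeight, sphD] at hlow
      linarith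
    have hupp' : 2 / (3 * (1 + dist x a)) < 1 / (1 + dist y a) := by
      have : 2 / (3 * (1 + dist x a)) = 2 / 3 * (1 / (1 + dist x a)) := by field_simp
      simp only [sphHeight, sphD] at hupp
      linarith
    rw [div_lt_div_iff₀ (by positivity) (by positivity)] at hlow' hupp'
    refine ⟨y, ⟨?_, ?_⟩, rfl⟩
    · rw [Metric.mem_ball]
      linarith
    · rw [Metric.mem_ball, not_lt]
      linarith
  · rintro _ ⟨y, ⟨hyr, hyκ⟩, rfl⟩
    rw [Metric.mem_ball] at hyr
    rw [Metric.mem_ball, not_lt, div_le_iff₀ (by positivity)] at hyκ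
    have hy0 : 0 < 1 + dist y a := by positivity
    have hr0 : 0 < 1 + r := by linarith
    simp only [Set.mem_sdiff, Set.mem_ofPred_eq, sphHatDist_none_some, not_lt]
    constructor
    · rw [div_lt_div_iff₀ hy0 hr0]
      linarith
    · gcongr
end
end
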